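/- For all z_1, z_2 ∈ ℂ and generic tuples ū (length n), v̄ (length m): Σ_{v̄ ⇒ {v̄_I, v̄_II}} z_1^{#v̄_II}·K^{(z_2)}_{n,#v̄_I}(ū | v̄_I)·f(v̄_I, v̄_II) = K^{(z_2 − z_1)}_{n,m}(ū | v̄), and Σ_{v̄ ⇒ {v̄_I, v̄_II}} z_1^{#v̄_II}·\bar{K}^{(z_2)}_{n,#v̄_I}(ū | v̄_I)·f(v̄_II, v̄_I) = \bar{K}^{(z_2 − z_1)}_{n,m}(ū | v̄), where the sums run over all partitions of v̄ into two disjoint subtuples with no restriction on cardinalities. -/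

import Mathlib

open scoped BigOperators

noncomputable section

/-- The rational function `g(u,v) = c/(u-v)`. -/
def gC (c u v : ℂ) : ℂ := c / (u - v)

/-- The rational function `f(u,v) = (u-v+c)/(u-v)`. -/
def fC (c u v : ℂ) : ℂ := (u - v + c) / (u - v)

/-- The rational function `h(u,v) = (u-v+c)/c`. -/
def hC (c u v : ℂ) : ℂ := (u - v + c) / c

/-- A family of parameters is generic if all pairwise differences avoid `0, ±c, ±2c`. -/
def Generic (c : ℂ) {ι : Type*} (w : ι → ℂ) : Prop :=
  ∀ i j, i ≠ j → w i - w j ≠ 0 ∧ w i - w j ≠ c ∧ w i - w j ≠ -c ∧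
    w i - w j ≠ 2 * c ∧ w i - w j ≠ -2 * c

/-- The modified Izergin determinant `K^{(z)}(x̄|ȳ)`. -/
def KIz (c z : ℂ) {ι κ : Type*} [Fintype ι] [Fintype κ] [DecidableEq κ]
    (x : ι → ℂ) (y : κ → ℂ) : ℂ :=
  Matrix.det (Matrix.of fun j k : κ =>
    -z * (if j = k then 1 else 0) +
      (∏ i, fC c (x i) (y j)) * (∏ i ∈ Finset.univ.erase j, fC c (y j) (y i))
        / hC c (y j) (y k))

/-- The conjugated modified Izergin determinant: `c` is replaced by `-c`. -/
def KIzBar (c z : ℂ) {ι κ : Type*} [Fintype ι] [Fintype κ] [DecidableEq κ]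
    (x : ι → ℂ) (y : κ → ℂ) : ℂ :=
  KIz (-c) z x y

/-- Restriction of a tuple to a subtuple indexed by a `Finset`. -/
def restr {p : ℕ} (w : Fin p → ℂ) (s : Finset (Fin p)) : {x // x ∈ s} → ℂ :=
  fun i => w i.1

/-- Double product `f(w̄_s, w̄_t)` over two subtuples of a tuple. -/
def fSS (c : ℂ) {p : ℕ} (w : Fin p → ℂ) (s t : Finset (Fin p)) : ℂ :=
  ∏ i ∈ s, ∏ j ∈ t, fC c (w i) (w j)

open Finset Polynomial in
lemma sum_f_one (c : ℂ) (hc : c ≠ 0) {κ : Type*} [DecidableEq κ] (y : κ → ℂ)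
    (hy : Function.Injective y) (T : Finset κ) :
    ∑ j ∈ T, ∏ i ∈ T.erase j, fC c (y j) (y i) = (T.card : ℂ) := by
  rcases T.eq_empty_or_nonempty with rfl | hT
  · simp
  have hpos : 0 < T.card := hT.card_pos
  set P : ℂ[X] := ∏ i ∈ T, (X - C (y i - c)) with hP
  set Q : ℂ[X] := ∏ i ∈ T, (X - C (y i)) with hQ
  have hPm : P.Monic := monic_prod_of_monic _ _ fun i _ => monic_X_sub_C _
  have hQm : Q.Monic := monic_prod_of_monic _ _ fun i _ => monic_X_sub_C _
  have hPd : P.degree = T.card := by rw [hP, degree_prod]; simp only [degree_X_sub_C]; simp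
  have hQd : Q.degree = T.card := by rw [hQ, degree_prod]; simp
  have hdeg : (P - Q).degree < T.card := by
    rw [← hPd]
    apply degree_sub_lt_left (by rw [hPd, hQd]) hPm.ne_zero
    rw [hPm.leadingCoeff, hQm.leadingCoeff]
  have h := Lagrange.coeff_eq_sum (s := T) (v := y) hy.injOn hdeg
  rw [coeff_sub, hP, hQ, prod_X_sub_C_coeff_card_pred _ _ hpos,
    prod_X_sub_C_coeff_card_pred _ _ hpos] at h
  have h2 : ∀ i ∈ T, (eval (y i) (∏ i ∈ T, (X - C (y i - c)) - ∏ i ∈ T, (X - C (y i)))) /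
      ∏ j ∈ T.erase i, (y i - y j) = c * ∏ j ∈ T.erase i, fC c (y i) (y j) := by
    intro i hi
    simp only [eval_sub, eval_prod, eval_X, eval_C]
    rw [Finset.prod_eq_zero (f := fun j => y i - y j) hi (sub_self _), ← Finset.mul_prod_erase _ _ hi]
    simp only [fC, Finset.prod_div_distrib]
    rw [sub_zero, mul_div_assoc]
    congr 1
    · ring
    · congr 1
      apply Finset.prod_congr rfl
      intros; ring
  rw [Finset.sum_congr rfl h2, ← Finset.mul_sum] at h
  apply mul_left_cancel₀ hc
  rw [← h]
  simp [Finset.sum_sub_distrib]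
  ring

open Finset in
lemma sum_f_k (c : ℂ) (hc : c ≠ 0) {κ : Type*} [DecidableEq κ] (y : κ → ℂ)
    (hy : Function.Injective y) (k : ℕ) : ∀ (T : Finset κ),
    ∑ r ∈ T.powersetCard k, ∏ i ∈ r, ∏ j ∈ T \ r, fC c (y i) (y j) = (T.card.choose k : ℂ) := by
  induction k with
  | zero => intro T; simp
  | succ k ih =>
    intro T
    have hk : ((k : ℂ) + 1) ≠ 0 := by exact_mod_cast Nat.succ_ne_zero k
    apply mul_left_cancel₀ hk
    have e1 : ((k : ℂ) + 1) * ∑ r ∈ T.powersetCard (k + 1), ∏ i ∈ r, ∏ j ∈ T \ r, fC c (y i) (y j)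
        = ∑ r ∈ T.powersetCard (k + 1), ∑ a ∈ r, (∏ i ∈ r.erase a, fC c (y a) (y i)) *
          ∏ i ∈ r, ∏ j ∈ T \ r, fC c (y i) (y j) := by
      rw [Finset.mul_sum]
      apply Finset.sum_congr rfl
      intro r hr
      rw [← Finset.sum_mul, sum_f_one c hc y hy, (Finset.mem_powersetCard.1 hr).2]
      push_cast; rfl
    have e2 : ∑ r ∈ T.powersetCard (k + 1), ∑ a ∈ r, (∏ i ∈ r.erase a, fC c (y a) (y i)) *
          ∏ i ∈ r, ∏ j ∈ T \ r, fC c (y i) (y j)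
        = ∑ a ∈ T, ∑ r ∈ (T.erase a).powersetCard k, (∏ i ∈ T.erase a, fC c (y a) (y i)) *
          ∏ i ∈ r, ∏ j ∈ (T.erase a) \ r, fC c (y i) (y j) := by
      rw [Finset.sum_sigma', Finset.sum_sigma']
      refine Finset.sum_bij' (fun p _ => ⟨p.2, p.1.erase p.2⟩) (fun p _ => ⟨insert p.1 p.2, p.1⟩)
        ?_ ?_ ?_ ?_ ?_
      · rintro ⟨r, a⟩ h
        simp only [mem_sigma, mem_powersetCard] at h ⊢
        refine ⟨h.1.1 h.2, Finset.erase_subset_erase _ h.1.1, ?_⟩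
        rw [Finset.card_erase_of_mem h.2, h.1.2]; rfl
      · rintro ⟨a, r⟩ h
        simp only [mem_sigma, mem_powersetCard] at h ⊢
        have ha : a ∉ r := fun h' => by simpa using h.2.1 h'
        refine ⟨⟨?_, ?_⟩, Finset.mem_insert_self _ _⟩
        · exact Finset.insert_subset h.1 (h.2.1.trans (Finset.erase_subset _ _))
        · rw [Finset.card_insert_of_notMem ha, h.2.2]
      · rintro ⟨r, a⟩ h
        simp only [mem_sigma, mem_powersetCard] at h ⊢
        simp [Finset.insert_erase h.2]
      · rintro ⟨a, r⟩ h
        simp only [mem_sigma, mem_powersetCard] at h ⊢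
        have ha : a ∉ r := fun h' => by simpa using h.2.1 h'
        simp [Finset.erase_insert ha]
      · rintro ⟨r, a⟩ h
        simp only [mem_sigma, mem_powersetCard] at h ⊢
        have hs : T.erase a \ r.erase a = T \ r := by
          ext x; simp only [mem_sdiff, mem_erase]
          by_cases hx : x = a
          · subst hx; simp [h.2]
          · simp [hx]
        have hs2 : (∏ i ∈ T.erase a, fC c (y a) (y i)) = (∏ i ∈ T \ r, fC c (y a) (y i)) *
            ∏ i ∈ r.erase a, fC c (y a) (y i) := by
          rw [← hs, Finset.prod_sdiff (Finset.erase_subset_erase _ h.1.1)]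
        rw [hs, hs2, ← Finset.mul_prod_erase r _ h.2]
        ring
    rw [e1, e2]
    simp_rw [← Finset.mul_sum, ih]
    have e3 : ∀ a ∈ T, (∏ i ∈ T.erase a, fC c (y a) (y i)) * ((T.erase a).card.choose k : ℂ)
      = (∏ i ∈ T.erase a, fC c (y a) (y i)) * ((T.card - 1).choose k : ℂ) := by
      intro a ha; rw [Finset.card_erase_of_mem ha]
    rw [Finset.sum_congr rfl e3, ← Finset.sum_mul, sum_f_one c hc y hy]
    rcases Nat.eq_zero_or_pos T.card with h0 | h0
    · simp [h0]
    · obtain ⟨n, hn⟩ := Nat.exists_eq_succ_of_ne_zero h0.ne'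
      rw [hn]
      have := Nat.add_one_mul_choose_eq n k
      simp only [Nat.succ_eq_add_one, Nat.add_sub_cancel]
      have h' : (((n + 1) * n.choose k : ℕ) : ℂ) = (((n+1).choose (k+1) * (k+1) : ℕ) : ℂ) := by
        rw [this]
      push_cast at h' ⊢
      rw [h']; ring

open Finset in
lemma sum_f_pow (c : ℂ) (hc : c ≠ 0) {κ : Type*} [DecidableEq κ] (y : κ → ℂ)
    (hy : Function.Injective y) (a b : ℂ) (T : Finset κ) :
    ∑ r ∈ T.powerset, a ^ r.card * b ^ (T \ r).card * ∏ i ∈ r, ∏ j ∈ T \ r, fC c (y i) (y j)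
      = (a + b) ^ T.card := by
  rw [Finset.sum_powerset, add_pow]
  apply Finset.sum_congr rfl
  intro k _
  rw [← sum_f_k c hc y hy k T, Finset.mul_sum]
  apply Finset.sum_congr rfl
  intro r hr
  obtain ⟨h1, h2⟩ := Finset.mem_powersetCard.1 hr
  rw [Finset.card_sdiff_of_subset h1, h2]

lemma cauchy_det (c : ℂ) (hc : c ≠ 0) (κ : Type) [Fintype κ] :
    ∀ [DecidableEq κ] (y : κ → ℂ),
    (∀ i j, i ≠ j → y i - y j ≠ 0) → (∀ i j, y i - y j + c ≠ 0) →
    Matrix.det (Matrix.of fun j k : κ => c / (y j - y k + c)) =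
      ∏ j, ∏ k, (if j = k then 1 else (fC c (y j) (y k))⁻¹) := by
  classical
  refine Fintype.induction_empty_option (P := fun κ _ => ∀ [DecidableEq κ] (y : κ → ℂ),
    (∀ i j, i ≠ j → y i - y j ≠ 0) → (∀ i j, y i - y j + c ≠ 0) →
    Matrix.det (Matrix.of fun j k : κ => c / (y j - y k + c)) =
      ∏ j, ∏ k, (if j = k then 1 else (fC c (y j) (y k))⁻¹)) ?_ ?_ ?_ κ
  · intro α β _ e ih _ y h0 h1
    let _ : Fintype α := Fintype.ofEquiv β e.symm
    have := ih (y ∘ e) (fun i j hij => h0 _ _ (fun h => hij (e.injective h))) (fun i j => h1 _ _)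
    rw [← Matrix.det_submatrix_equiv_self e]
    refine Eq.trans this ?_
    rw [← e.prod_comp]
    apply Finset.prod_congr rfl
    intro j _
    rw [← e.prod_comp]
    apply Finset.prod_congr rfl
    intro k _
    simp only [Function.comp_apply, e.injective.eq_iff]
  · intros; simp
  · intro α _ ih _ y h0 h1
    have := ih (fun i => y (some i)) (fun i j hij => h0 _ _ (by simpa using hij))
      (fun i j => h1 _ _)
    rw [← Matrix.det_submatrix_equiv_self (Equiv.optionEquivSumPUnit.{0, 0} α).symm]
    have hb : (Matrix.of fun j k : Option α => c / (y j - y k + c)).submatrix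
        (Equiv.optionEquivSumPUnit.{0, 0} α).symm (Equiv.optionEquivSumPUnit.{0, 0} α).symm =
        Matrix.fromBlocks (Matrix.of fun j k : α => c / (y (some j) - y (some k) + c))
          (Matrix.of fun (j : α) (_ : PUnit.{1}) => c / (y (some j) - y none + c))
          (Matrix.of fun (_ : PUnit.{1}) (k : α) => c / (y none - y (some k) + c)) 1 := by
      ext (i | i) (j | j) <;> simp [hc]
    rw [hb, Matrix.det_fromBlocks_one₂₂]
    have hs : (Matrix.of fun j k : α => c / (y (some j) - y (some k) + c)) -
          (Matrix.of fun (j : α) (_ : PUnit.{1}) => c / (y (some j) - y none + c)) *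
          (Matrix.of fun (_ : PUnit.{1}) (k : α) => c / (y none - y (some k) + c)) =
        Matrix.of fun j k => (fC c (y (some j)) (y none))⁻¹ *
          (Matrix.of (fun j k => (fC c (y none) (y (some k)))⁻¹ *
          (Matrix.of fun j k : α => c / (y (some j) - y (some k) + c)) j k) j k) := by
      ext j k
      have a1 := h1 (some j) (some k)
      have a2 := h1 (some j) none
      have a3 := h1 none (some k)
      have a4 := h0 (some j) none (by simp)
      have a5 := h0 none (some k) (by simp)
      simp [Matrix.mul_apply, fC]
      field_simp
      ring
    rw [hs, Matrix.det_mul_column, Matrix.det_mul_row, this]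
    simp only [Fintype.prod_option]
    simp [Finset.prod_mul_distrib]
    ring

lemma det_expand {κ : Type} [Fintype κ] [DecidableEq κ] (M : Matrix κ κ ℂ) (z : ℂ) :
    (M + z • (1 : Matrix κ κ ℂ)).det =
      ∑ s : Finset κ, z ^ sᶜ.card * (M.submatrix (↑) (↑) : Matrix s s ℂ).det := by
  have h := (Matrix.detRowAlternating : (κ → ℂ) [⋀^κ]→ₗ[ℂ] ℂ).map_add_univ
    M (z • (1 : Matrix κ κ ℂ))
  refine Eq.trans h ?_
  apply Finset.sum_congr rfl
  intro s _
  rw [← Matrix.det_piecewise_one_eq_submatrix_det]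
  have hp : (s.piecewise M (z • (1 : Matrix κ κ ℂ)) : κ → κ → ℂ) =
      fun i => (if i ∈ sᶜ then z else 1) •
        (s.piecewise M.row (1 : Matrix κ κ ℂ).row) i := by
    funext i j
    by_cases hi : i ∈ s <;> simp [hi, Finset.piecewise, Matrix.row]
  rw [hp]
  have := (Matrix.detRowAlternating : (κ → ℂ) [⋀^κ]→ₗ[ℂ] ℂ).map_smul_univ
    (fun i => if i ∈ sᶜ then z else 1) (s.piecewise M.row (1 : Matrix κ κ ℂ).row)
  refine Eq.trans this ?_
  rw [Finset.prod_ite_mem, Finset.univ_inter, Finset.prod_const, smul_eq_mul]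
  rfl

lemma KIz_expand (c : ℂ) (hc : c ≠ 0) (z : ℂ) {ι κ : Type} [Fintype ι] [Fintype κ]
    [DecidableEq κ] (x : ι → ℂ) (y : κ → ℂ)
    (h0 : ∀ i j, i ≠ j → y i - y j ≠ 0) (h1 : ∀ i j, y i - y j + c ≠ 0) :
    KIz c z x y = ∑ s : Finset κ, (-z) ^ sᶜ.card *
      ((∏ j ∈ s, ∏ i, fC c (x i) (y j)) * ∏ i ∈ s, ∏ j ∈ sᶜ, fC c (y i) (y j)) := by
  have hf : ∀ i j, i ≠ j → fC c (y i) (y j) ≠ 0 := fun i j hij =>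
    div_ne_zero (h1 i j) (h0 i j hij)
  set D : κ → ℂ := fun j => (∏ i, fC c (x i) (y j)) *
    (∏ i ∈ Finset.univ.erase j, fC c (y j) (y i)) with hD
  have e : KIz c z x y = ((Matrix.of fun j k : κ => D j * (c / (y j - y k + c))) +
      (-z) • (1 : Matrix κ κ ℂ)).det := by
    unfold KIz
    congr 1
    ext j k
    by_cases hjk : j = k <;> simp [hjk, hC, hD] <;> field_simp <;> ring
  rw [e, det_expand]
  apply Finset.sum_congr rfl
  intro s _
  congr 1
  have e2 : ((Matrix.of fun j k : κ => D j * (c / (y j - y k + c))).submatrix (↑) (↑) :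
      Matrix s s ℂ) = Matrix.of fun j k : s => D j *
        (Matrix.of (fun j k : s => c / (y j - y k + c)) j k) := by
    ext j k; simp
  rw [e2, Matrix.det_mul_column, cauchy_det c hc s (fun i => y i)
    (fun i j hij => h0 _ _ (fun h => hij (Subtype.ext h))) (fun i j => h1 _ _),
    ← Finset.prod_mul_distrib, ← Finset.prod_mul_distrib, ← Finset.prod_coe_sort s]
  apply Finset.prod_congr rfl
  intro j _
  have e3 : (∏ k : s, if j = k then (1 : ℂ) else (fC c (y j) (y k))⁻¹) =
      ∏ k ∈ s.erase j, (fC c (y j) (y k))⁻¹ := by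
    have e31 : (∏ k : s, if j = k then (1 : ℂ) else (fC c (y j) (y k))⁻¹) =
        ∏ k ∈ s, if j.1 = k then (1 : ℂ) else (fC c (y j) (y k))⁻¹ := by
      rw [← Finset.prod_coe_sort s]
      simp only [Subtype.ext_iff]
    rw [e31, ← Finset.prod_erase s (a := j.1) (by simp)]
    apply Finset.prod_congr rfl
    intro k hk
    rw [if_neg (Finset.ne_of_mem_erase hk).symm]
  have e4 : (Finset.univ.erase j.1) = s.erase j ∪ sᶜ := by
    ext k
    by_cases hk : k = j.1
    · subst hk; simp
    · simp [hk]; tauto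
  have e5 : Disjoint (s.erase j) sᶜ :=
    Disjoint.mono_left (Finset.erase_subset _ _) disjoint_compl_right
  simp only [hD]
  rw [e3, e4, Finset.prod_union e5, Finset.prod_inv_distrib]
  have hne : ∏ k ∈ s.erase j, fC c (y j) (y k) ≠ 0 :=
    Finset.prod_ne_zero_iff.2 fun k hk => hf _ _ (Finset.ne_of_mem_erase hk).symm
  field_simp

open Finset in
lemma KIz_sub (c : ℂ) (hc : c ≠ 0) (z : ℂ) {n m : ℕ} (u : Fin n → ℂ) (v : Fin m → ℂ)
    (h0 : ∀ i j, i ≠ j → v i - v j ≠ 0) (h1 : ∀ i j, v i - v j + c ≠ 0) (s : Finset (Fin m)) :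
    KIz c z u (restr v s) = ∑ t ∈ s.powerset, (-z) ^ (s \ t).card *
      ((∏ j ∈ t, ∏ i, fC c (u i) (v j)) * ∏ i ∈ t, ∏ j ∈ s \ t, fC c (v i) (v j)) := by
  rw [KIz_expand c hc z u (restr v s)
    (fun i j hij => h0 _ _ (fun h => hij (Subtype.ext h))) (fun i j => h1 _ _)]
  refine Finset.sum_bij' (fun t _ => t.map (Function.Embedding.subtype _))
    (fun t _ => t.subtype (· ∈ s)) ?_ ?_ ?_ ?_ ?_
  · intro t _
    rw [Finset.mem_powerset]
    intro a ha
    obtain ⟨b, _, rfl⟩ := Finset.mem_map.1 ha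
    exact b.2
  · intros; exact Finset.mem_univ _
  · intro t _
    ext a; simp
  · intro t ht
    rw [Finset.subtype_map_of_mem]
    intro a ha; exact Finset.mem_powerset.1 ht ha
  · intro t _
    have hcompl : s \ t.map (Function.Embedding.subtype _) =
        tᶜ.map (Function.Embedding.subtype (· ∈ s)) := by
      ext a; simp
      tauto
    rw [hcompl]
    simp only [Finset.card_map, Finset.prod_map]
    rfl

open Finset in
lemma main_sum (c : ℂ) (hc : c ≠ 0) (z1 z2 : ℂ) {n m : ℕ} (u : Fin n → ℂ) (v : Fin m → ℂ)
    (h0 : ∀ i j, i ≠ j → v i - v j ≠ 0) (h1 : ∀ i j, v i - v j + c ≠ 0) :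
    (∑ s : Finset (Fin m),
        z1 ^ sᶜ.card * KIz c z2 u (restr v s) *
          (∏ i ∈ s, ∏ j ∈ sᶜ, fC c (v i) (v j)))
        = KIz c (z2 - z1) u v := by
  have hinj : Function.Injective v := by
    intro i j hij
    by_contra h
    exact h0 i j h (sub_eq_zero.2 hij)
  rw [KIz_expand c hc _ u v h0 h1]
  simp_rw [KIz_sub c hc z2 u v h0 h1]
  have hp : -(z2 - z1) = -z2 + z1 := by ring
  simp_rw [hp, ← sum_f_pow c hc v hinj, Finset.mul_sum, Finset.sum_mul]
  rw [Finset.sum_sigma', Finset.sum_sigma']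
  refine Finset.sum_bij' (fun p _ => ⟨p.2, p.1 \ p.2⟩) (fun p _ => ⟨p.1 ∪ p.2, p.1⟩) ?_ ?_ ?_ ?_ ?_
  · rintro ⟨s, t⟩ h
    simp only [mem_sigma, mem_univ, mem_powerset, true_and] at h ⊢
    intro a ha
    simp at ha ⊢; exact ha.2
  · rintro ⟨t, r⟩ h
    simp only [mem_sigma, mem_univ, mem_powerset, true_and] at h ⊢
    exact Finset.subset_union_left
  · rintro ⟨s, t⟩ h
    simp only [mem_sigma, mem_univ, mem_powerset, true_and] at h ⊢
    rw [Finset.union_sdiff_of_subset h]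
  · rintro ⟨t, r⟩ h
    simp only [mem_sigma, mem_univ, mem_powerset, true_and] at h ⊢
    have : (t ∪ r) \ t = r := by
      ext a
      have := @h a
      simp at this ⊢
      tauto
    rw [this]
  · rintro ⟨s, t⟩ h
    simp only [mem_sigma, mem_univ, mem_powerset, true_and] at h ⊢
    have hs : tᶜ \ (s \ t) = sᶜ := by
      ext a
      have := @h a
      simp at this ⊢
      tauto
    have hsub : s \ t ⊆ tᶜ := by
      intro a ha
      simp at ha ⊢; exact ha.2
    have e1 : (∏ i ∈ s, ∏ j ∈ sᶜ, fC c (v i) (v j)) =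
        (∏ i ∈ s \ t, ∏ j ∈ sᶜ, fC c (v i) (v j)) * ∏ i ∈ t, ∏ j ∈ sᶜ, fC c (v i) (v j) :=
      (Finset.prod_sdiff h).symm
    have e2 : (∏ i ∈ t, ∏ j ∈ tᶜ, fC c (v i) (v j)) =
        (∏ i ∈ t, ∏ j ∈ sᶜ, fC c (v i) (v j)) * ∏ i ∈ t, ∏ j ∈ s \ t, fC c (v i) (v j) := by
      rw [← Finset.prod_mul_distrib]
      apply Finset.prod_congr rfl
      intro i _
      rw [← hs, Finset.prod_sdiff hsub]
    rw [hs, e1, e2]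
    ring

/-- Summation formula shifting the parameter of the modified Izergin determinant
(Proposition `SUM-Kf` of the paper). -/
theorem stmt18
    (c : ℂ) (hc : c ≠ 0) (z1 z2 : ℂ) (n m : ℕ)
    (u : Fin n → ℂ) (v : Fin m → ℂ)
    (hgen : Generic c (Fin.append u v)) :
    (∑ s : Finset (Fin m),
        z1 ^ sᶜ.card * KIz c z2 u (restr v s) *
          (∏ i ∈ s, ∏ j ∈ sᶜ, fC c (v i) (v j)))
        = KIz c (z2 - z1) u v ∧
      (∑ s : Finset (Fin m),
        z1 ^ sᶜ.card * KIzBar c z2 u (restr v s) *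
          (∏ i ∈ sᶜ, ∏ j ∈ s, fC c (v i) (v j)))
        = KIzBar c (z2 - z1) u v := by
  have hv : ∀ i j, i ≠ j → v i - v j ≠ 0 ∧ v i - v j ≠ c ∧ v i - v j ≠ -c := by
    intro i j hij
    have := hgen (Fin.natAdd n i) (Fin.natAdd n j) (by simpa using hij)
    simp only [Fin.append_right] at this
    exact ⟨this.1, this.2.1, this.2.2.1⟩
  refine ⟨main_sum c hc z1 z2 u v (fun i j h => (hv i j h).1) ?_, ?_⟩
  · intro i j h
    by_cases hij : i = j
    · subst hij; simp at h; exact hc h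
    · exact (hv i j hij).2.2 (eq_neg_of_add_eq_zero_left h)
  · unfold KIzBar
    rw [← main_sum (-c) (neg_ne_zero.2 hc) z1 z2 u v (fun i j h => (hv i j h).1) ?_]
    · apply Finset.sum_congr rfl
      intro s _
      rw [Finset.prod_comm]
      congr 1
      apply Finset.prod_congr rfl
      intro i _
      apply Finset.prod_congr rfl
      intro j _
      unfold fC
      rw [← neg_div_neg_eq]
      congr 1 <;> ring
    · intro i j h
      by_cases hij : i = j
      · subst hij; simp at h; exact hc h
      · exact (hv i j hij).2.1 (by linear_combination h)
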